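/- Let p be a symmetric real polynomial in two variables that is monotone decreasing on [0,1]², i.e. p(x′,y′) ≤ p(x,y) whenever (x,y), (x′,y′) ∈ [0,1]² with x ≤ x′ and y ≤ y′. Then the graphon W defined by W(x,y) = 1 if p(x,y) ≥ 0 and W(x,y) = 0 otherwise is finitely forcible in 𝒲. -/

import Mathlib

open MeasureTheory
open scoped Classical

noncomputable section

/-- The unit interval `[0,1]` as a subset of `ℝ`. -/
def I01 : Set ℝ := Set.Icc 0 1

/-- The cube `[0,1]^n`. -/
def cube (n : ℕ) : Set (Fin n → ℝ) := Set.univ.pi fun _ => I01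

/-- `W` belongs to `𝒲`: a bounded symmetric measurable function on `[0,1]²`. -/
def memW (W : ℝ → ℝ → ℝ) : Prop :=
  Measurable (Function.uncurry W) ∧
  (∀ x ∈ I01, ∀ y ∈ I01, W x y = W y x) ∧
  ∃ C : ℝ, ∀ x ∈ I01, ∀ y ∈ I01, |W x y| ≤ C

/-- `W` belongs to `𝒲₀`: a graphon, i.e. symmetric measurable with values in `[0,1]`. -/
def memW0 (W : ℝ → ℝ → ℝ) : Prop :=
  Measurable (Function.uncurry W) ∧
  (∀ x ∈ I01, ∀ y ∈ I01, W x y = W y x) ∧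
  ∀ x ∈ I01, ∀ y ∈ I01, W x y ∈ Set.Icc (0 : ℝ) 1

/-- Homomorphism density `t(F,W)` of a finite simple graph `F` in `W`. -/
def homDensity {n : ℕ} (F : SimpleGraph (Fin n)) (W : ℝ → ℝ → ℝ) : ℝ :=
  ∫ x in cube n,
    ∏ p ∈ Finset.univ.filter (fun p : Fin n × Fin n => p.1 < p.2 ∧ F.Adj p.1 p.2),
      W (x p.1) (x p.2)

/-- Two kernels are weakly isomorphic if all their homomorphism densities agree. -/
def WeaklyIsomorphic (U W : ℝ → ℝ → ℝ) : Prop :=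
  ∀ (n : ℕ) (F : SimpleGraph (Fin n)), homDensity F U = homDensity F W

/-- `W` is finitely forcible within the class `A`. -/
def FinitelyForcible (A : (ℝ → ℝ → ℝ) → Prop) (W : ℝ → ℝ → ℝ) : Prop :=
  A W ∧ ∃ (k : ℕ) (n : Fin k → ℕ) (F : ∀ i, SimpleGraph (Fin (n i))),
    ∀ U, A U → (∀ i, homDensity (F i) U = homDensity (F i) W) → WeaklyIsomorphic U W

/-- Density function `t^k(F,W)` of a `k`-labeled graph, as a function of the
labeled variables; the graph has `k` labeled and `m` unlabeled vertices. -/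
def labDensity {k m : ℕ} (F : SimpleGraph (Fin (k + m))) (W : ℝ → ℝ → ℝ)
    (x : Fin k → ℝ) : ℝ :=
  ∫ y in cube m,
    ∏ p ∈ Finset.univ.filter
        (fun p : Fin (k + m) × Fin (k + m) => p.1 < p.2 ∧ F.Adj p.1 p.2),
      W (Fin.append x y p.1) (Fin.append x y p.2)

/-!
Let `U` have the same densities as `W`. Expanding `∫ ((∫ A (1 - B) C (1 - D)) (∫ B (1 - A) D (1 -
C)))²`, where `A, B, C, D` are four independent random rows, gives a combination of densities of
subgraphs of `K_{4,4}`. It vanishes for `W`, hence for `U`, and this forces any two rows of `U` to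
be nested; comparing a row with nearby ones then shows that `U` is `{0,1}`-valued. Order the points
by decreasing degree and replace each of them by its rank in `[0,1]`, which is uniformly
distributed. For a nested kernel the density of `K_{a+1,b+1}` is `(a + 1)(b + 1) ∫ U(x, y) x^a y^b`
in terms of the ranks, because in a product of nested indicators only the largest argument matters.
Finitely many densities therefore determine `∫ U p`. Among all kernels with values in `[0,1]` this
integral is maximized by the indicator of `p ≥ 0`, and only by it, as `p ≠ 0` almost everywhere.
-/

/-! ### Product measures -/

section ProductMeasures

variable {α ι : Type*} [MeasurableSpace α] [Fintype ι]
  {μ : Measure α} [IsProbabilityMeasure μ]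

lemma measurePreserving_eval_pair {i j : ι} (hij : i ≠ j) :
    MeasurePreserving (fun z : ι → α => (z i, z j)) (Measure.pi fun _ => μ) (μ.prod μ) := by
  have hindep := (ProbabilityTheory.iIndepFun_pi (ι := ι) (μ := fun _ => μ) (X := fun _ => id)
    fun _ => aemeasurable_id).indepFun hij
  refine ⟨by fun_prop, ?_⟩
  have hmap := hindep.map_prod_eq_prod_map_map (measurable_pi_apply i).aemeasurable
    (measurable_pi_apply j).aemeasurable
  simpa only [id, (measurePreserving_eval (fun _ : ι => μ) _).map_eq] using hmap

lemma measurePreserving_eval_pair_pair {i j k l : ι} (hij : i ≠ j) (hkl : k ≠ l)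
    (hik : i ≠ k) (hil : i ≠ l) (hjk : j ≠ k) (hjl : j ≠ l) :
    MeasurePreserving (fun z : ι → α => ((z i, z j), (z k, z l))) (Measure.pi fun _ => μ)
      ((μ.prod μ).prod (μ.prod μ)) := by
  have hindep := (ProbabilityTheory.iIndepFun_pi (ι := ι) (μ := fun _ => μ) (X := fun _ => id)
    fun _ => aemeasurable_id).indepFun_prodMk_prodMk (by fun_prop) i j k l hik hil hjk hjl
  refine ⟨by fun_prop, ?_⟩
  have hmap := hindep.map_prod_eq_prod_map_map (by fun_prop) (by fun_prop)
  simpa only [id, (measurePreserving_eval_pair hij).map_eq,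
    (measurePreserving_eval_pair hkl).map_eq] using hmap

lemma ae_injective_comp_pi {L : Type*} {κ : α → L} (hκ : ∀ᵐ w ∂μ.prod μ, κ w.1 ≠ κ w.2) :
    ∀ᵐ z ∂Measure.pi fun _ : ι => μ, Function.Injective fun i => κ (z i) := by
  have hpairs : ∀ᵐ z ∂Measure.pi fun _ : ι => μ, ∀ i j, i ≠ j → κ (z i) ≠ κ (z j) := by
    simp only [ae_all_iff]
    exact fun i j hij => (measurePreserving_eval_pair hij).quasiMeasurePreserving.ae hκ
  filter_upwards [hpairs] with z hz i j hij
  exact by_contra fun hne => hz i j hne hij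

end ProductMeasures

/-! ### Typical points -/

section TypicalPoints

variable {Ω β : Type*} [MeasurableSpace Ω] [MeasurableSpace β] {μ : Measure Ω} {ν : Measure β}

-- These are the points that `f` sends into the support of its own distribution.
lemma ae_forall_mem_nhds_measure_preimage_ne_zero {Y : Type*} [TopologicalSpace Y]
    [SecondCountableTopology Y] (μ : Measure Ω) (f : Ω → Y) :
    ∀ᵐ x ∂μ, ∀ V ∈ nhds (f x), μ (f ⁻¹' V) ≠ 0 := by
  let _ : TopologicalSpace Ω := .induced f inferInstance
  have : SecondCountableTopology Ω := TopologicalSpace.secondCountableTopology_induced Ω Y f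
  filter_upwards [Measure.support_mem_ae (μ := μ)] with x hx V hV
  exact ((Measure.mem_support_iff_forall x).1 hx _
    (continuous_induced_dom.continuousAt.preimage_mem_nhds hV)).ne'

lemma ae_diag_mem_of_isClosed {Y : Type*} [TopologicalSpace Y] [SecondCountableTopology Y]
    [SFinite μ] {f : Ω → Y} {C : Set (Y × Y)} (hC : IsClosed C)
    (h : ∀ᵐ w ∂μ.prod μ, (f w.1, f w.2) ∈ C) : ∀ᵐ x ∂μ, (f x, f x) ∈ C := by
  filter_upwards [ae_forall_mem_nhds_measure_preimage_ne_zero μ f] with x hx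
  by_contra hxC
  obtain ⟨V, hV, V', hV', hVV'⟩ := mem_nhds_prod_iff.1 (hC.isOpen_compl.mem_nhds hxC)
  have hnull : μ.prod μ ((f ⁻¹' V) ×ˢ (f ⁻¹' V')) = 0 :=
    measure_mono_null (fun w hw => hVV' (Set.mk_mem_prod hw.1 hw.2)) h
  rw [Measure.prod_prod] at hnull
  exact (mul_ne_zero (hx V hV) (hx V' hV')) hnull

/-- A closed condition on pairs of `L²` functions passes to the diagonal, where the inner products
become squared norms. -/
lemma ae_ae_eq_zero_or_ae_eq_zero_of_inner_mul_inner_eq_zero [SFinite μ] [IsSeparable ν]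
    {D D' : Ω → β → ℝ} (hD : ∀ w, MemLp (D w) 2 ν) (hD' : ∀ w, MemLp (D' w) 2 ν)
    (h : ∀ᵐ v ∂μ.prod μ, (∫ y, D v.1 y * D v.2 y ∂ν) * ∫ y, D' v.1 y * D' v.2 y ∂ν = 0) :
    ∀ᵐ w ∂μ, D w =ᵐ[ν] 0 ∨ D' w =ᵐ[ν] 0 := by
  have : Fact ((1 : ENNReal) ≤ 2) := ⟨one_le_two⟩
  have : Fact ((2 : ENNReal) ≠ ⊤) := ⟨ENNReal.ofNat_ne_top⟩
  have hinner : ∀ f g : β → ℝ, ∀ (hf : MemLp f 2 ν) (hg : MemLp g 2 ν),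
      inner ℝ (hf.toLp f) (hg.toLp g) = ∫ y, f y * g y ∂ν := fun f g hf hg => by
    rw [L2.inner_def]
    refine integral_congr_ae ?_
    filter_upwards [hf.coeFn_toLp, hg.coeFn_toLp] with y hfy hgy
    simp [hfy, hgy, mul_comm]
  have hclosed : IsClosed {v : (Lp ℝ 2 ν × Lp ℝ 2 ν) × (Lp ℝ 2 ν × Lp ℝ 2 ν) |
      inner ℝ v.1.1 v.2.1 * inner ℝ v.1.2 v.2.2 = 0} :=
    isClosed_eq (by fun_prop) continuous_const
  filter_upwards [ae_diag_mem_of_isClosed (f := fun w => ((hD w).toLp, (hD' w).toLp)) hclosed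
    (by simpa only [Set.mem_ofPred_eq, hinner] using h)] with w hw
  simp only [mul_eq_zero, inner_self_eq_zero] at hw
  exact hw.imp (fun h => (hD w).coeFn_toLp.symm.trans (Lp.eq_zero_iff_ae_eq_zero.1 h))
    fun h => (hD' w).coeFn_toLp.symm.trans (Lp.eq_zero_iff_ae_eq_zero.1 h)

end TypicalPoints

/-! ### Bounded measurable functions -/

/-- Bounded measurable real functions: the class in which every integral below lives. A kernel `U`
is in it when `Function.uncurry U` is. -/
structure BoundedMeasurable {Ω : Type*} [MeasurableSpace Ω] (f : Ω → ℝ) : Prop where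
  measurable : Measurable f
  exists_abs_le : ∃ C, ∀ x, |f x| ≤ C

namespace BoundedMeasurable

variable {Ω Ω' : Type*} [MeasurableSpace Ω] [MeasurableSpace Ω'] {f g : Ω → ℝ}

lemma const (c : ℝ) : BoundedMeasurable fun _ : Ω => c := ⟨measurable_const, |c|, fun _ => le_rfl⟩

lemma comp (hf : BoundedMeasurable f) {φ : Ω' → Ω} (hφ : Measurable φ) :
    BoundedMeasurable fun x => f (φ x) :=
  ⟨hf.measurable.comp hφ, hf.exists_abs_le.imp fun _ hC x => hC (φ x)⟩

lemma mul (hf : BoundedMeasurable f) (hg : BoundedMeasurable g) :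
    BoundedMeasurable fun x => f x * g x := by
  obtain ⟨C, hC⟩ := hf.exists_abs_le
  obtain ⟨D, hD⟩ := hg.exists_abs_le
  refine ⟨hf.measurable.mul hg.measurable, C * D, fun x => ?_⟩
  rw [abs_mul]
  exact mul_le_mul (hC x) (hD x) (abs_nonneg _) ((abs_nonneg _).trans (hC x))

lemma add (hf : BoundedMeasurable f) (hg : BoundedMeasurable g) :
    BoundedMeasurable fun x => f x + g x := by
  obtain ⟨C, hC⟩ := hf.exists_abs_le
  obtain ⟨D, hD⟩ := hg.exists_abs_le
  exact ⟨hf.measurable.add hg.measurable, C + D,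
    fun x => (abs_add_le _ _).trans (add_le_add (hC x) (hD x))⟩

lemma const_sub (hf : BoundedMeasurable f) (c : ℝ) : BoundedMeasurable fun x => c - f x := by
  simpa only [neg_one_mul, ← sub_eq_add_neg] using (const c).add ((const (-1)).mul hf)

lemma prod {ι : Type*} {f : ι → Ω → ℝ} (s : Finset ι) (hf : ∀ i, BoundedMeasurable (f i)) :
    BoundedMeasurable fun x => ∏ i ∈ s, f i x := by
  induction s using Finset.induction_on with
  | empty => simpa only [Finset.prod_empty] using const 1
  | insert i s hi ih => simpa only [Finset.prod_insert hi] using (hf i).mul ih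

lemma pow (hf : BoundedMeasurable f) (n : ℕ) : BoundedMeasurable fun x => f x ^ n := by
  simpa only [Finset.prod_const, Finset.card_range] using prod (Finset.range n) fun _ => hf

lemma ite_zero (hf : BoundedMeasurable f) {q : Ω → Prop} [DecidablePred q]
    (hq : MeasurableSet {x | q x}) : BoundedMeasurable fun x => if q x then f x else 0 := by
  obtain ⟨C, hC⟩ := hf.exists_abs_le
  refine ⟨hf.measurable.ite hq measurable_const, C, fun x => ?_⟩
  split_ifs
  exacts [hC x, abs_zero.trans_le ((abs_nonneg _).trans (hC x))]

lemma of_continuous [TopologicalSpace Ω] [CompactSpace Ω] [OpensMeasurableSpace Ω]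
    (hf : Continuous f) : BoundedMeasurable f :=
  ⟨hf.measurable, (isCompact_univ.exists_bound_of_continuousOn hf.continuousOn).imp
    fun _ hC x => hC x (Set.mem_univ x)⟩

lemma integrable (hf : BoundedMeasurable f) (μ : Measure Ω) [IsFiniteMeasure μ] :
    Integrable f μ :=
  hf.exists_abs_le.elim fun C hC =>
    .of_bound hf.measurable.aestronglyMeasurable C (.of_forall hC)

lemma memLp (hf : BoundedMeasurable f) (p : ENNReal) (μ : Measure Ω) [IsFiniteMeasure μ] :
    MemLp f p μ :=
  hf.exists_abs_le.elim fun C hC =>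
    .of_bound hf.measurable.aestronglyMeasurable C (.of_forall hC)

lemma integral_right {f : Ω × Ω' → ℝ} (hf : BoundedMeasurable f) (ν : Measure Ω')
    [IsFiniteMeasure ν] : BoundedMeasurable fun x => ∫ y, f (x, y) ∂ν := by
  obtain ⟨C, hC⟩ := hf.exists_abs_le
  exact ⟨hf.measurable.stronglyMeasurable.integral_prod_right'.measurable, C * ν.real Set.univ,
    fun x => norm_integral_le_of_norm_le_const (f := fun y => f (x, y)) (.of_forall fun y => hC _)⟩

end BoundedMeasurable

/-! ### Homomorphism densities -/

section GraphDensity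

variable {α β : Type*} [MeasurableSpace α] [MeasurableSpace β] {n : ℕ}

/-- `homDensity` over an arbitrary measure space in place of `[0,1]`. -/
def graphDensity (μ : Measure α) (F : SimpleGraph (Fin n)) (U : α → α → ℝ) : ℝ :=
  ∫ z, ∏ e ∈ Finset.univ.filter (fun e : Fin n × Fin n => e.1 < e.2 ∧ F.Adj e.1 e.2),
    U (z e.1) (z e.2) ∂Measure.pi fun _ => μ

lemma graphDensity_congr_ae {μ : Measure α} [IsProbabilityMeasure μ] {U V : α → α → ℝ}
    (h : ∀ᵐ w ∂μ.prod μ, U w.1 w.2 = V w.1 w.2) (F : SimpleGraph (Fin n)) :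
    graphDensity μ F U = graphDensity μ F V := by
  refine integral_congr_ae ?_
  have hpairs : ∀ᵐ z ∂Measure.pi fun _ : Fin n => μ, ∀ i j, i ≠ j →
      U (z i) (z j) = V (z i) (z j) := by
    simp only [ae_all_iff]
    exact fun i j hij => (measurePreserving_eval_pair hij).quasiMeasurePreserving.ae h
  filter_upwards [hpairs] with z hz
  exact Finset.prod_congr rfl fun e he => hz _ _ (Finset.mem_filter.1 he).2.1.ne

lemma graphDensity_comp_measurePreserving {μ : Measure α} {ν : Measure β}
    [SigmaFinite ν] {φ : α → β} (hφ : MeasurePreserving φ μ ν) {W : β → β → ℝ}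
    (hW : Measurable (Function.uncurry W)) (F : SimpleGraph (Fin n)) :
    graphDensity μ F (fun x y => W (φ x) (φ y)) = graphDensity ν F W := by
  have hpi := measurePreserving_pi (fun _ : Fin n => μ) (fun _ => ν) fun _ => hφ
  rw [graphDensity, graphDensity, ← hpi.map_eq, integral_map hpi.measurable.aemeasurable]
  refine (Finset.measurable_prod _ fun e _ => ?_).aestronglyMeasurable
  exact hW.comp (g := Function.uncurry W) (f := fun z : Fin n → β => (z e.1, z e.2)) (by fun_prop)

/-- The restriction of a kernel to the unit interval, viewed as a probability space. -/
def unitKernel (W : ℝ → ℝ → ℝ) (x y : unitInterval) : ℝ := W x y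

lemma homDensity_eq_graphDensity (F : SimpleGraph (Fin n)) {W : ℝ → ℝ → ℝ}
    (hW : Measurable (Function.uncurry W)) :
    homDensity F W = graphDensity volume F (unitKernel W) := by
  refine ((graphDensity_comp_measurePreserving
    unitInterval.measurePreserving_coe hW F).trans ?_).symm
  rw [graphDensity, homDensity, cube, volume_pi, Measure.restrict_pi_pi, I01]

end GraphDensity

section BipartiteDensity

variable {α β ι κ : Type*} [MeasurableSpace α] [MeasurableSpace β]

lemma boundedMeasurable_bipartite {U : α → β → ℝ} (hU : BoundedMeasurable (Function.uncurry U))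
    (E : Finset (ι × κ)) :
    BoundedMeasurable fun z : (ι → α) × (κ → β) => ∏ e ∈ E, U (z.1 e.1) (z.2 e.2) :=
  .prod E fun e => hU.comp (φ := fun z : (ι → α) × (κ → β) => (z.1 e.1, z.2 e.2)) (by fun_prop)

variable [Fintype ι] [Fintype κ]

/-- The density in `U` of the bipartite graph with sides `ι`, `κ` and edge set `E`, the vertices of
the two sides being sampled from `μ` and from `ν`. -/
def bipartiteDensity (μ : Measure α) (ν : Measure β) (E : Finset (ι × κ)) (U : α → β → ℝ) : ℝ :=
  ∫ z, ∏ e ∈ E, U (z.1 e.1) (z.2 e.2)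
    ∂(Measure.pi fun _ : ι => μ).prod (Measure.pi fun _ : κ => ν)

lemma integral_prod_affine_eq_sum_bipartiteDensity (μ : Measure α) (ν : Measure β)
    [IsProbabilityMeasure μ] [IsProbabilityMeasure ν] {U : α → β → ℝ}
    (hU : BoundedMeasurable (Function.uncurry U)) (c d : ι × κ → ℝ) :
    ∫ z, ∏ e, (d e * U (z.1 e.1) (z.2 e.2) + c e)
        ∂(Measure.pi fun _ : ι => μ).prod (Measure.pi fun _ : κ => ν) =
      ∑ E ∈ Finset.univ.powerset, ((∏ e ∈ E, d e) * ∏ e ∈ Finset.univ \ E, c e) *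
        bipartiteDensity μ ν E U := by
  simp only [Finset.prod_add, Finset.prod_mul_distrib, mul_right_comm]
  rw [integral_finsetSum]
  · simp only [integral_const_mul, mul_right_comm, bipartiteDensity]
  · exact fun E _ => ((boundedMeasurable_bipartite hU E).integrable _).const_mul _

variable {a b : ℕ}

/-- The bipartite graph with edge set `E`, its two sides placed one after the other. -/
def bipartiteGraph (E : Finset (Fin a × Fin b)) : SimpleGraph (Fin (a + b)) :=
  .fromRel fun u v => ∃ e ∈ E, u = Fin.castAdd b e.1 ∧ v = Fin.natAdd a e.2

lemma filter_lt_and_bipartiteGraph_adj (E : Finset (Fin a × Fin b)) :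
    Finset.univ.filter (fun e : Fin (a + b) × Fin (a + b) =>
        e.1 < e.2 ∧ (bipartiteGraph E).Adj e.1 e.2) =
      E.map ((Fin.castAddEmb b).prodMap (Fin.natAddEmb a)) := by
  have hlt : ∀ (i : Fin a) (j : Fin b), Fin.castAdd b i < Fin.natAdd a j := fun i j => by
    simpa [Fin.lt_def] using i.2.trans_le (Nat.le_add_right a j)
  ext ⟨u, v⟩
  simp only [bipartiteGraph, SimpleGraph.fromRel_adj, Finset.mem_filter, Finset.mem_univ, true_and,
    Finset.mem_map, Function.Embedding.coe_prodMap, Prod.map, Prod.mk.injEq]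
  constructor
  · rintro ⟨huv, -, ⟨e, he, rfl, rfl⟩ | ⟨e, -, rfl, rfl⟩⟩
    exacts [⟨e, he, rfl, rfl⟩, absurd huv (hlt _ _).not_gt]
  · rintro ⟨e, he, rfl, rfl⟩
    exact ⟨hlt _ _, (hlt _ _).ne, .inl ⟨e, he, rfl, rfl⟩⟩

lemma graphDensity_bipartiteGraph (μ : Measure α) [SigmaFinite μ] (E : Finset (Fin a × Fin b))
    (U : α → α → ℝ) : graphDensity μ (bipartiteGraph E) U = bipartiteDensity μ μ E U := by
  have hsplit := (measurePreserving_sumPiEquivProdPi_symm fun _ : Fin a ⊕ Fin b => μ).trans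
    (measurePreserving_piCongrLeft (fun _ : Fin (a + b) => μ) finSumFinEquiv)
  have hpi := fun z i => Equiv.piCongrLeft_apply_apply (fun _ : Fin (a + b) => α)
    finSumFinEquiv z i
  rw [graphDensity, filter_lt_and_bipartiteGraph_adj, ← hsplit.integral_comp']
  refine integral_congr_ae (.of_forall fun z => ?_)
  simp only [Finset.prod_map]
  exact Finset.prod_congr rfl fun e _ => congrArg₂ U (hpi _ (.inl e.1)) (hpi _ (.inr e.2))

end BipartiteDensity

/-! ### The nesting defect -/

section NestingDefect

variable {α β : Type*} [MeasurableSpace β]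

/-- For a `{0,1}`-valued kernel this is the indicator, as a function of the column `y`, of the
difference of the rows `w.1` and `w.2`. -/
def rowExcess (U : α → β → ℝ) (w : α × α) (y : β) : ℝ := U w.1 y * (1 - U w.2 y)

lemma sq_integral_rowExcess_eq_integral_prod {ν : Measure β} [IsProbabilityMeasure ν]
    {U : α → β → ℝ} (x : Fin 4 → α) :
    ((∫ y, rowExcess U (x 0, x 1) y * rowExcess U (x 2, x 3) y ∂ν) *
      ∫ y, rowExcess U (x 1, x 0) y * rowExcess U (x 3, x 2) y ∂ν) ^ 2 =
    ∫ y, ∏ e : Fin 4 × Fin 4, ((if Even (e.1 + e.2 : ℕ) then 1 else -1) * U (x e.1) (y e.2) +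
      if Even (e.1 + e.2 : ℕ) then 0 else 1) ∂Measure.pi fun _ : Fin 4 => ν := by
  set f := fun y => rowExcess U (x 0, x 1) y * rowExcess U (x 2, x 3) y with hf
  set g := fun y => rowExcess U (x 1, x 0) y * rowExcess U (x 3, x 2) y with hg
  have hfubini := integral_fintype_prod_eq_prod (μ := fun _ : Fin 4 => ν) ![f, g, f, g]
  simp only [Fin.prod_univ_four, Matrix.cons_val] at hfubini
  calc _ = (∫ y, f y ∂ν) * (∫ y, g y ∂ν) * (∫ y, f y ∂ν) * ∫ y, g y ∂ν := by ring
    _ = _ := hfubini.symm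
    _ = _ := by
      refine integral_congr_ae (.of_forall fun y => ?_)
      simp only [hf, hg, rowExcess, Nat.even_iff, ite_mul, one_mul, neg_mul,
        Fintype.prod_prod_type, Fin.prod_univ_four, Fin.isValue, Fin.coe_ofNat_eq_mod,
        Nat.zero_mod, add_zero, Nat.one_mod, Nat.reduceMod, Nat.add_mod_right, Nat.mod_succ,
        ↓reduceIte, zero_add, one_ne_zero, Nat.reduceAdd, Nat.mod_self]
      ring

variable [MeasurableSpace α]

/-- Measures how far the rows of `U` are from being pairwise nested. Expanding the square turns it
into a density of `K_{4,4}` in which half of the edges are weighted by `U` and the others by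
`1 - U`. -/
def nestingDefect (μ : Measure α) (ν : Measure β) (U : α → β → ℝ) : ℝ :=
  ∫ v, ((∫ y, rowExcess U v.1 y * rowExcess U v.2 y ∂ν) *
    ∫ y, rowExcess U v.1.swap y * rowExcess U v.2.swap y ∂ν) ^ 2 ∂(μ.prod μ).prod (μ.prod μ)

variable {μ : Measure α} {ν : Measure β} [IsProbabilityMeasure μ] [IsProbabilityMeasure ν]
  {U V : α → β → ℝ}

lemma boundedMeasurable_rowExcess (hU : BoundedMeasurable (Function.uncurry U)) :
    BoundedMeasurable (Function.uncurry (rowExcess U)) :=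
  (hU.comp (φ := fun z : (α × α) × β => (z.1.1, z.2)) (by fun_prop)).mul
    ((hU.comp (φ := fun z : (α × α) × β => (z.1.2, z.2)) (by fun_prop)).const_sub 1)

lemma boundedMeasurable_nestingDefect_integrand (hU : BoundedMeasurable (Function.uncurry U)) :
    BoundedMeasurable fun v : (α × α) × (α × α) =>
      ((∫ y, rowExcess U v.1 y * rowExcess U v.2 y ∂ν) *
        ∫ y, rowExcess U v.1.swap y * rowExcess U v.2.swap y ∂ν) ^ 2 := by
  have hexcess := boundedMeasurable_rowExcess hU
  have hinner : BoundedMeasurable fun v : (α × α) × (α × α) =>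
      ∫ y, rowExcess U v.1 y * rowExcess U v.2 y ∂ν :=
    ((hexcess.comp (φ := fun z : ((α × α) × (α × α)) × β => (z.1.1, z.2)) (by fun_prop)).mul
      (hexcess.comp (φ := fun z : ((α × α) × (α × α)) × β => (z.1.2, z.2)) (by fun_prop))
      ).integral_right ν
  exact (hinner.mul (hinner.comp (φ := fun v => (v.1.swap, v.2.swap)) (by fun_prop))).pow 2

lemma nestingDefect_eq_integral_prod (hU : BoundedMeasurable (Function.uncurry U)) :
    nestingDefect μ ν U =
      ∫ z, ∏ e : Fin 4 × Fin 4, ((if Even (e.1 + e.2 : ℕ) then 1 else -1) * U (z.1 e.1) (z.2 e.2) +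
        if Even (e.1 + e.2 : ℕ) then 0 else 1)
        ∂(Measure.pi fun _ : Fin 4 => μ).prod (Measure.pi fun _ : Fin 4 => ν) := by
  have hpairs := measurePreserving_eval_pair_pair (μ := μ) (i := (0 : Fin 4)) (j := 1) (k := 2)
    (l := 3) (by decide) (by decide) (by decide) (by decide) (by decide) (by decide)
  rw [nestingDefect, ← hpairs.map_eq, integral_map hpairs.measurable.aemeasurable
    (boundedMeasurable_nestingDefect_integrand hU).measurable.aestronglyMeasurable, integral_prod]
  · simp only [Prod.swap_prod_mk, sq_integral_rowExcess_eq_integral_prod]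
  refine BoundedMeasurable.integrable (.prod _ fun e => ?_) _
  exact ((BoundedMeasurable.const _).mul (hU.comp
    (φ := fun z : (Fin 4 → α) × (Fin 4 → β) => (z.1 e.1, z.2 e.2)) (by fun_prop))).add (.const _)

lemma nestingDefect_eq_of_bipartiteDensity_eq (hU : BoundedMeasurable (Function.uncurry U))
    (hV : BoundedMeasurable (Function.uncurry V))
    (h : ∀ E : Finset (Fin 4 × Fin 4), bipartiteDensity μ ν E U = bipartiteDensity μ ν E V) :
    nestingDefect μ ν U = nestingDefect μ ν V := by
  simp only [nestingDefect_eq_integral_prod, integral_prod_affine_eq_sum_bipartiteDensity, hU, hV,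
    h]

lemma ae_rowExcess_eq_zero_of_nestingDefect_eq_zero [IsSeparable ν]
    (hU : BoundedMeasurable (Function.uncurry U)) (h0 : nestingDefect μ ν U = 0) :
    ∀ᵐ w ∂μ.prod μ, rowExcess U w =ᵐ[ν] 0 ∨ rowExcess U w.swap =ᵐ[ν] 0 := by
  have hL2 : ∀ w, MemLp (rowExcess U w) 2 ν := fun w =>
    ((boundedMeasurable_rowExcess hU).comp (φ := fun y => (w, y)) (by fun_prop)).memLp 2 ν
  refine ae_ae_eq_zero_or_ae_eq_zero_of_inner_mul_inner_eq_zero hL2 (fun w => hL2 w.swap) ?_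
  have hsq := (integral_eq_zero_iff_of_nonneg (fun v => sq_nonneg _)
    ((boundedMeasurable_nestingDefect_integrand hU).integrable _)).1 h0
  filter_upwards [hsq] with v hv
  exact pow_eq_zero_iff two_ne_zero |>.1 hv

end NestingDefect

/-! ### Nested kernels -/

section Nested

variable {α β L : Type*} [MeasurableSpace β] {ν : Measure β} {U : α → β → ℝ}

/-- Orders the points by decreasing degree; the order of `α` breaks the ties. -/
def degreeKey (ν : Measure β) (U : α → β → ℝ) (x : α) : ℝ ×ₗ α := toLex (-∫ y, U x y ∂ν, x)

lemma degreeKey_injective : Function.Injective (degreeKey ν U) :=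
  fun _ _ h => (Prod.ext_iff.1 (toLex_inj.1 h)).2

variable [MeasurableSpace α] {μ : Measure α}

/-- The rows of `U` grow, in the sense of inclusion of `{0,1}`-valued functions, as the key `κ` of
their index decreases. -/
def NestedAlong [LT L] (μ : Measure α) (ν : Measure β) (κ : α → L) (U : α → β → ℝ) : Prop :=
  ∀ᵐ y ∂ν, ∀ᵐ w ∂μ.prod μ, κ w.2 < κ w.1 → rowExcess U w y = 0

lemma ae_forall_lt_of_nestedAlong [LT L] [SFinite μ] {κ : α → L} (h : NestedAlong μ ν κ U) :
    ∀ᵐ y ∂ν, ∀ᵐ x ∂μ, U x y ≠ 0 → ∀ᵐ x' ∂μ, κ x' < κ x → U x' y = 1 := by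
  filter_upwards [h] with y hy
  filter_upwards [Measure.ae_ae_of_ae_prod hy] with x hx hne
  filter_upwards [hx] with x' hx' hlt
  exact (sub_eq_zero.1 ((mul_eq_zero.1 (hx' hlt)).resolve_left hne)).symm

section DegreeKey

variable [LinearOrder α] [IsProbabilityMeasure ν]

lemma measurableSet_degreeKey_lt [TopologicalSpace α] [OrderClosedTopology α]
    [SecondCountableTopology α] [OpensMeasurableSpace α] (hU : Measurable (Function.uncurry U)) :
    MeasurableSet {z : α × α | degreeKey ν U z.1 < degreeKey ν U z.2} := by
  have hdeg : Measurable fun x => -∫ y, U x y ∂ν :=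
    hU.stronglyMeasurable.integral_prod_right.measurable.neg
  have h1 : Measurable fun z : α × α => -∫ y, U z.1 y ∂ν := hdeg.comp measurable_fst
  have h2 : Measurable fun z : α × α => -∫ y, U z.2 y ∂ν := hdeg.comp measurable_snd
  simp only [degreeKey, Prod.Lex.toLex_lt_toLex]
  exact (measurableSet_lt h1 h2).union
    ((measurableSet_eq_fun h1 h2).inter (measurableSet_lt measurable_fst measurable_snd))

lemma rowExcess_ae_eq_zero_of_degreeKey_lt (hU : BoundedMeasurable (Function.uncurry U))
    {w : α × α} (h1 : ∀ᵐ y ∂ν, U w.1 y = 0 ∨ U w.1 y = 1) (h2 : ∀ᵐ y ∂ν, U w.2 y = 0 ∨ U w.2 y = 1)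
    (hnested : rowExcess U w =ᵐ[ν] 0 ∨ rowExcess U w.swap =ᵐ[ν] 0)
    (hlt : degreeKey ν U w.2 < degreeKey ν U w.1) : rowExcess U w =ᵐ[ν] 0 := by
  refine hnested.elim id fun hswap => ?_
  have hrow : ∀ x, Integrable (U x) ν := fun x =>
    (hU.comp (φ := Prod.mk x) (by fun_prop)).integrable ν
  have hexcess : Integrable (rowExcess U w) ν :=
    ((boundedMeasurable_rowExcess hU).comp (φ := Prod.mk w) (by fun_prop)).integrable ν
  have hnonneg : 0 ≤ᵐ[ν] rowExcess U w := by
    filter_upwards [h1, h2] with y hy1 hy2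
    rcases hy1 with hy1 | hy1 <;> rcases hy2 with hy2 | hy2 <;> simp [rowExcess, hy1, hy2]
  have hdegree : ∫ y, U w.1 y ∂ν ≤ ∫ y, U w.2 y ∂ν := by
    rcases Prod.Lex.toLex_lt_toLex.1 hlt with hlt | hlt
    exacts [(neg_lt_neg_iff.1 hlt).le, (neg_inj.1 hlt.1).ge]
  have hdiff : ∫ y, rowExcess U w y ∂ν = ∫ y, U w.1 y ∂ν - ∫ y, U w.2 y ∂ν := by
    rw [← integral_sub (hrow _) (hrow _)]
    refine integral_congr_ae ?_
    filter_upwards [hswap] with y hy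
    simp only [rowExcess, Prod.fst_swap, Prod.snd_swap, Pi.zero_apply] at hy ⊢
    linarith
  exact (integral_eq_zero_iff_of_nonneg_ae hnonneg hexcess).1
    (le_antisymm (by linarith) (integral_nonneg_of_ae hnonneg))

end DegreeKey

variable [IsProbabilityMeasure μ] [IsProbabilityMeasure ν] [IsSeparable ν]

lemma ae_eq_zero_or_one_of_nestingDefect_eq_zero
    (hU : BoundedMeasurable (Function.uncurry U)) (h0 : nestingDefect μ ν U = 0) :
    ∀ᵐ x ∂μ, ∀ᵐ y ∂ν, U x y = 0 ∨ U x y = 1 := by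
  have hexcess := (boundedMeasurable_rowExcess hU).measurable
  have hcolumns : ∀ᵐ y ∂ν, ∀ᵐ w ∂μ.prod μ, rowExcess U w y = 0 ∨ rowExcess U w.swap y = 0 := by
    refine (Measure.ae_ae_comm ?_).1 ?_
    · exact (measurableSet_eq_fun hexcess measurable_const).union (measurableSet_eq_fun
        (hexcess.comp (measurable_swap.prodMap measurable_id)) measurable_const)
    · filter_upwards [ae_rowExcess_eq_zero_of_nestingDefect_eq_zero hU h0] with w hw
      exact hw.elim (fun h => h.mono fun y => .inl) fun h => h.mono fun y => .inr
  have hclosed : IsClosed {u : ℝ × ℝ | u.1 * (1 - u.2) = 0 ∨ u.2 * (1 - u.1) = 0} :=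
    (isClosed_eq (by fun_prop) continuous_const).union (isClosed_eq (by fun_prop) continuous_const)
  refine (Measure.ae_ae_comm ?_).2 ?_
  · exact (measurableSet_eq_fun hU.measurable measurable_const).union
      (measurableSet_eq_fun hU.measurable measurable_const)
  filter_upwards [hcolumns] with y hy
  filter_upwards [ae_diag_mem_of_isClosed (f := fun x => U x y) hclosed hy] with x hx
  simp only [or_self, mul_eq_zero, sub_eq_zero] at hx
  exact hx.imp_right Eq.symm

lemma nestedAlong_degreeKey_of_nestingDefect_eq_zero [LinearOrder α] [TopologicalSpace α]
    [OrderClosedTopology α] [SecondCountableTopology α] [OpensMeasurableSpace α]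
    (hU : BoundedMeasurable (Function.uncurry U)) (h0 : nestingDefect μ ν U = 0) :
    NestedAlong μ ν (degreeKey ν U) U := by
  refine (Measure.ae_ae_comm ?_).1 ?_
  · exact ((measurable_swap.comp measurable_fst) (measurableSet_degreeKey_lt hU.measurable)).imp
      (measurableSet_eq_fun (boundedMeasurable_rowExcess hU).measurable measurable_const)
  have h01 := ae_eq_zero_or_one_of_nestingDefect_eq_zero hU h0
  filter_upwards [ae_rowExcess_eq_zero_of_nestingDefect_eq_zero hU h0,
    Measure.quasiMeasurePreserving_fst.ae h01, Measure.quasiMeasurePreserving_snd.ae h01]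
    with w hnested h1 h2
  by_cases hlt : degreeKey ν U w.2 < degreeKey ν U w.1
  · filter_upwards [rowExcess_ae_eq_zero_of_degreeKey_lt hU h1 h2 hnested hlt] with y hy _ using hy
  · exact .of_forall fun y h => absurd h hlt

end Nested

/-! ### Ranks -/

lemma prod_eq_sum_mul_prod_ite_lt {R L : Type*} [CommSemiring R] [LinearOrder L] {b : ℕ}
    {u : Fin (b + 1) → L} (hu : Function.Injective u) (h : Fin (b + 1) → R) :
    ∏ i, h i =
      ∑ i, h i * ∏ j : Fin b, if u (i.succAbove j) < u i then h (i.succAbove j) else 0 := by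
  obtain ⟨i, -, hmax⟩ := Finset.exists_max_image Finset.univ u Finset.univ_nonempty
  have hlt : ∀ j, u (i.succAbove j) < u i := fun j =>
    (hmax _ (Finset.mem_univ _)).lt_of_ne (hu.ne (i.succAbove_ne j))
  rw [Finset.sum_eq_single_of_mem i (Finset.mem_univ i), Fin.prod_univ_succAbove h i]
  · simp only [hlt, if_true]
  · intro i' _ hne
    obtain ⟨j, hj⟩ := Fin.exists_succAbove_eq hne.symm
    rw [Finset.prod_eq_zero (Finset.mem_univ j), mul_zero]
    rw [hj, if_neg (hmax i' (Finset.mem_univ _)).not_gt]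

section Rank

variable {α L : Type*} [MeasurableSpace α] [LinearOrder L]

/-- A key along which the points of `α` can be ranked: comparisons are measurable and ties are
negligible. -/
structure IsRankingKey (μ : Measure α) (κ : α → L) : Prop where
  measurableSet_lt : MeasurableSet {w : α × α | κ w.1 < κ w.2}
  ae_ne : ∀ᵐ w ∂μ.prod μ, κ w.1 ≠ κ w.2

variable {μ : Measure α} {κ : α → L} {g : α → ℝ}

lemma IsRankingKey.of_injective [SFinite μ] [NullSingletonClass μ]
    (hlt : MeasurableSet {w : α × α | κ w.1 < κ w.2}) (hinj : Function.Injective κ) :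
    IsRankingKey μ κ := by
  refine ⟨hlt, (Measure.ae_prod_iff_ae_ae ?_).2 (.of_forall fun x => ?_)⟩
  · simp only [ne_iff_lt_or_gt]
    exact hlt.union (measurable_swap hlt)
  · filter_upwards [Measure.ae_ne μ x] with x' hne
    exact hinj.ne hne.symm

lemma isRankingKey_degreeKey {α β : Type*} [MeasurableSpace α] [MeasurableSpace β] [LinearOrder α]
    [TopologicalSpace α] [OrderClosedTopology α] [SecondCountableTopology α]
    [OpensMeasurableSpace α] {μ : Measure α} [SFinite μ] [NullSingletonClass μ] {ν : Measure β}
    [IsProbabilityMeasure ν] {U : α → β → ℝ} (hU : Measurable (Function.uncurry U)) :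
    IsRankingKey μ (degreeKey ν U) :=
  .of_injective (measurableSet_degreeKey_lt hU) degreeKey_injective

lemma boundedMeasurable_prod_indicator_lt (hκ : IsRankingKey μ κ) (hg : BoundedMeasurable g)
    (b : ℕ) : BoundedMeasurable fun w : α × (Fin b → α) =>
      g w.1 * ∏ j, if κ (w.2 j) < κ w.1 then g (w.2 j) else 0 := by
  refine (hg.comp measurable_fst).mul (.prod _ fun j => ?_)
  have hpair : Measurable fun w : α × (Fin b → α) => (w.2 j, w.1) := by fun_prop
  exact (hg.comp (measurable_fst.comp hpair)).ite_zero (hpair hκ.measurableSet_lt)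

/-- The proportion of points whose key is smaller than that of `y`. -/
def rank (μ : Measure α) [IsProbabilityMeasure μ] (κ : α → L) (y : α) : unitInterval :=
  ⟨μ.real {x | κ x < κ y}, measureReal_nonneg, measureReal_le_one⟩

variable [IsProbabilityMeasure μ]

lemma integral_mul_prod_succAbove (hκ : IsRankingKey μ κ) (hg : BoundedMeasurable g) {b : ℕ}
    (i : Fin (b + 1)) :
    ∫ z : Fin (b + 1) → α, g (z i) * ∏ j : Fin b,
        (if κ (z (i.succAbove j)) < κ (z i) then g (z (i.succAbove j)) else 0)
        ∂(Measure.pi fun _ => μ) =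
      ∫ y, g y * (∫ x in {x | κ x < κ y}, g x ∂μ) ^ b ∂μ := by
  have hsplit := measurePreserving_piFinSuccAbove (fun _ : Fin (b + 1) => μ) i
  refine (hsplit.integral_comp' fun w =>
    g w.1 * ∏ j, if κ (w.2 j) < κ w.1 then g (w.2 j) else 0).trans ?_
  rw [integral_prod _ ((boundedMeasurable_prod_indicator_lt hκ hg b).integrable _)]
  refine integral_congr_ae (.of_forall fun y => ?_)
  have hmeas : MeasurableSet {x | κ x < κ y} := measurable_prodMk_right hκ.measurableSet_lt
  simp only
  rw [integral_const_mul, integral_fintype_prod_eq_pow fun x => if κ x < κ y then g x else 0,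
    ← integral_indicator hmeas, Fintype.card_fin]
  simp only [Set.indicator_apply, Set.mem_ofPred_eq]

/-- Symmetrization: split `α ^ (b + 1)` according to which coordinate has the largest key. -/
lemma integral_pow_succ_eq (hκ : IsRankingKey μ κ) (hg : BoundedMeasurable g) (b : ℕ) :
    (∫ y, g y ∂μ) ^ (b + 1) =
      (b + 1) * ∫ y, g y * (∫ x in {x | κ x < κ y}, g x ∂μ) ^ b ∂μ := by
  have hintegrable : ∀ i : Fin (b + 1), Integrable (fun z : Fin (b + 1) → α => g (z i) *
      ∏ j : Fin b, if κ (z (i.succAbove j)) < κ (z i) then g (z (i.succAbove j)) else 0)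
      (Measure.pi fun _ => μ) := fun i =>
    ((boundedMeasurable_prod_indicator_lt hκ hg b).comp (MeasurableEquiv.piFinSuccAbove
      (fun _ : Fin (b + 1) => α) i).measurable).integrable _
  calc (∫ y, g y ∂μ) ^ (b + 1)
      = ∫ z : Fin (b + 1) → α, ∏ i, g (z i) ∂Measure.pi fun _ => μ := by
        rw [integral_fintype_prod_eq_pow g, Fintype.card_fin]
    _ = ∫ z : Fin (b + 1) → α, ∑ i, g (z i) * ∏ j : Fin b,
          (if κ (z (i.succAbove j)) < κ (z i) then g (z (i.succAbove j)) else 0)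
          ∂Measure.pi fun _ => μ := by
        refine integral_congr_ae ?_
        filter_upwards [ae_injective_comp_pi hκ.ae_ne] with z hz
        exact prod_eq_sum_mul_prod_ite_lt hz _
    _ = (b + 1) * ∫ y, g y * (∫ x in {x | κ x < κ y}, g x ∂μ) ^ b ∂μ := by
        rw [integral_finsetSum _ fun i _ => hintegrable i]
        simp only [integral_mul_prod_succAbove hκ hg, Finset.sum_const, Finset.card_univ,
          Fintype.card_fin, nsmul_eq_mul, Nat.cast_succ]

lemma integral_pow_succ_eq_integral_mul_rank_pow (hκ : IsRankingKey μ κ)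
    (hg : BoundedMeasurable g)
    (hmono : ∀ᵐ y ∂μ, g y ≠ 0 → ∀ᵐ x ∂μ, κ x < κ y → g x = 1) (b : ℕ) :
    (∫ y, g y ∂μ) ^ (b + 1) = (b + 1) * ∫ y, g y * (rank μ κ y : ℝ) ^ b ∂μ := by
  rw [integral_pow_succ_eq hκ hg b]
  congr 1
  refine integral_congr_ae ?_
  filter_upwards [hmono] with y hy
  by_cases h0 : g y = 0
  · simp only [h0, zero_mul]
  have hmeas : MeasurableSet {x | κ x < κ y} := measurable_prodMk_right hκ.measurableSet_lt
  rw [setIntegral_congr_ae hmeas (hy h0), setIntegral_const, smul_eq_mul, mul_one]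
  rfl

lemma measurable_rank (hκ : IsRankingKey μ κ) : Measurable (rank μ κ) :=
  ((measurable_measure_prodMk_right hκ.measurableSet_lt).ennreal_toReal).subtype_mk

lemma integral_rank_pow (hκ : IsRankingKey μ κ) (b : ℕ) :
    ∫ y, (rank μ κ y : ℝ) ^ b ∂μ = 1 / (b + 1) := by
  have h := integral_pow_succ_eq_integral_mul_rank_pow hκ (.const 1)
    (.of_forall fun _ _ => .of_forall fun _ _ => rfl) b
  simp only [integral_const, probReal_univ, smul_eq_mul, mul_one, one_pow, one_mul] at h
  exact eq_div_of_mul_eq (Nat.cast_add_one_ne_zero b) (by rw [mul_comm, ← h])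

end Rank

section UnitInterval

open unitInterval

lemma ext_of_integral_pow_eq {a b : ℝ} {μ ν : Measure (Set.Icc a b)} [IsFiniteMeasure μ]
    [IsFiniteMeasure ν] (h : ∀ n : ℕ, ∫ x, (x : ℝ) ^ n ∂μ = ∫ x, (x : ℝ) ^ n ∂ν) : μ = ν := by
  have hint : ∀ (ξ : Measure (Set.Icc a b)) [IsFiniteMeasure ξ] (f : C(Set.Icc a b, ℝ)),
      Integrable f ξ := fun ξ _ f => f.continuous.integrable_of_hasCompactSupport
        (HasCompactSupport.of_compactSpace f)
  have hcont : ∀ (ξ : Measure (Set.Icc a b)) [IsFiniteMeasure ξ],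
      Continuous fun f : C(Set.Icc a b, ℝ) => ∫ x, f x ∂ξ := fun ξ _ =>
    (continuous_integral.comp (ContinuousMap.toLp 1 ξ ℝ).continuous).congr fun f =>
      integral_congr_ae (ContinuousMap.coeFn_toLp (𝕜 := ℝ) ξ f)
  have hpoly : (polynomialFunctions (Set.Icc a b) : Set C(Set.Icc a b, ℝ)) ⊆
      {f | ∫ x, f x ∂μ = ∫ x, f x ∂ν} := by
    rw [polynomialFunctions_coe]
    rintro _ ⟨q, rfl⟩
    simp only [Set.mem_ofPred_eq, Polynomial.toContinuousMapOnAlgHom_apply,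
      Polynomial.toContinuousMapOn_apply, Polynomial.toContinuousMap_apply,
      Polynomial.eval_eq_sum_range]
    rw [integral_finsetSum, integral_finsetSum]
    · simp only [integral_const_mul, h]
    all_goals exact fun i _ => (hint _ ⟨fun x => (x : ℝ) ^ i, by fun_prop⟩).const_mul _
  refine ext_of_forall_integral_eq_of_IsFiniteMeasure fun f => ?_
  have hmem : f.toContinuousMap ∈ (polynomialFunctions (Set.Icc a b)).topologicalClosure := by
    rw [polynomialFunctions_closure_eq_top]; trivial
  exact closure_minimal hpoly (isClosed_eq (hcont μ) (hcont ν)) hmem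

variable {α L : Type*} [MeasurableSpace α] [LinearOrder L]

lemma isRankingKey_id : IsRankingKey (volume : Measure I) id :=
  .of_injective (measurableSet_lt measurable_fst measurable_snd) Function.injective_id

lemma rank_volume_id (y : I) : rank volume id y = y := by
  ext
  exact (congrArg ENNReal.toReal (unitInterval.volume_Iio y)).trans (ENNReal.toReal_ofReal y.2.1)

lemma measurePreserving_rank {μ : Measure α} [IsProbabilityMeasure μ] {κ : α → L}
    (hκ : IsRankingKey μ κ) : MeasurePreserving (rank μ κ) μ volume := by
  refine ⟨measurable_rank hκ, ?_⟩
  have := Measure.isProbabilityMeasure_map (measurable_rank hκ).aemeasurable (μ := μ)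
  refine ext_of_integral_pow_eq fun n => ?_
  have huniform := integral_rank_pow isRankingKey_id n
  simp only [rank_volume_id] at huniform
  rw [integral_map (measurable_rank hκ).aemeasurable (by fun_prop), integral_rank_pow hκ, huniform]

end UnitInterval

/-! ### Complete bipartite densities of nested kernels -/

section CompleteBipartite

variable {α β L L' : Type*} [MeasurableSpace α] [MeasurableSpace β] [LinearOrder L] [LinearOrder L']
  {μ : Measure α} {ν : Measure β} [IsProbabilityMeasure μ] [IsProbabilityMeasure ν]
  {κ : α → L} {κ' : β → L'} {U : α → β → ℝ} {a b : ℕ}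

lemma boundedMeasurable_rank_pow (hκ : IsRankingKey μ κ) (b : ℕ) :
    BoundedMeasurable fun x => (rank μ κ x : ℝ) ^ b :=
  BoundedMeasurable.pow ⟨(measurable_rank hκ).subtype_val, 1, fun x =>
    (abs_of_nonneg (rank μ κ x).2.1).trans_le (rank μ κ x).2.2⟩ b

lemma boundedMeasurable_prod_eval (hU : BoundedMeasurable (Function.uncurry U)) :
    BoundedMeasurable fun z : (Fin b → β) × α => ∏ j, U z.2 (z.1 j) :=
  .prod _ fun j => hU.comp (φ := fun z : (Fin b → β) × α => (z.2, z.1 j)) (by fun_prop)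

lemma ae_integral_prod_pow_succ_eq (hκ : IsRankingKey μ κ)
    (hU : BoundedMeasurable (Function.uncurry U)) (hrows : NestedAlong μ ν κ U) :
    ∀ᵐ w ∂Measure.pi fun _ : Fin b => ν, (∫ x, ∏ j, U x (w j) ∂μ) ^ (a + 1) =
      (a + 1) * ∫ x, (∏ j, U x (w j)) * (rank μ κ x : ℝ) ^ a ∂μ := by
  have hcolumns : ∀ᵐ w ∂Measure.pi fun _ : Fin b => ν, ∀ j, ∀ᵐ x ∂μ,
      U x (w j) ≠ 0 → ∀ᵐ x' ∂μ, κ x' < κ x → U x' (w j) = 1 :=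
    ae_all_iff.2 fun j => (measurePreserving_eval (fun _ : Fin b => ν) j).quasiMeasurePreserving.ae
      (ae_forall_lt_of_nestedAlong hrows)
  filter_upwards [hcolumns] with w hw
  refine integral_pow_succ_eq_integral_mul_rank_pow hκ
    ((boundedMeasurable_prod_eval hU).comp (φ := Prod.mk w) (by fun_prop)) ?_ a
  filter_upwards [ae_all_iff.2 hw] with x hx hne
  filter_upwards [ae_all_iff.2 fun j => hx j (Finset.prod_ne_zero_iff.1 hne j (Finset.mem_univ j))]
    with x' hx' hlt
  exact Finset.prod_eq_one fun j _ => hx' j hlt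

lemma bipartiteDensity_univ_eq_integral_pow (hκ : IsRankingKey μ κ)
    (hU : BoundedMeasurable (Function.uncurry U)) (hrows : NestedAlong μ ν κ U) :
    bipartiteDensity μ ν (Finset.univ : Finset (Fin (a + 1) × Fin b)) U =
      (a + 1) * ∫ x, (∫ y, U x y ∂ν) ^ b * (rank μ κ x : ℝ) ^ a ∂μ := by
  calc bipartiteDensity μ ν (Finset.univ : Finset (Fin (a + 1) × Fin b)) U
      = ∫ w : Fin b → β, (∫ x, ∏ j, U x (w j) ∂μ) ^ (a + 1) ∂(Measure.pi fun _ => ν) := by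
        rw [bipartiteDensity,
          integral_prod_symm _ ((boundedMeasurable_bipartite hU _).integrable _)]
        refine integral_congr_ae (.of_forall fun w => ?_)
        simp only [Fintype.prod_prod_type]
        rw [integral_fintype_prod_eq_pow fun x => ∏ j, U x (w j), Fintype.card_fin]
    _ = (a + 1) * ∫ w : Fin b → β, ∫ x, (∏ j, U x (w j)) * (rank μ κ x : ℝ) ^ a ∂μ
          ∂(Measure.pi fun _ => ν) := by
        rw [← integral_const_mul]
        exact integral_congr_ae (ae_integral_prod_pow_succ_eq hκ hU hrows)
    _ = (a + 1) * ∫ x, (∫ y, U x y ∂ν) ^ b * (rank μ κ x : ℝ) ^ a ∂μ := by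
        rw [integral_integral_swap (((boundedMeasurable_prod_eval hU).mul
          ((boundedMeasurable_rank_pow hκ a).comp measurable_snd)).integrable _)]
        simp only [integral_mul_const, integral_fintype_prod_eq_pow, Fintype.card_fin]

lemma bipartiteDensity_univ_eq_integral_mul_rank_pow (hκ : IsRankingKey μ κ)
    (hκ' : IsRankingKey ν κ') (hU : BoundedMeasurable (Function.uncurry U))
    (hrows : NestedAlong μ ν κ U) (hcolumns : NestedAlong ν μ κ' fun y x => U x y) :
    bipartiteDensity μ ν (Finset.univ : Finset (Fin (a + 1) × Fin (b + 1))) U =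
      (a + 1) * (b + 1) * ∫ x, ∫ y, U x y *
        ((rank μ κ x : ℝ) ^ a * (rank ν κ' y : ℝ) ^ b) ∂ν ∂μ := by
  rw [bipartiteDensity_univ_eq_integral_pow hκ hU hrows, mul_assoc,
    ← integral_const_mul (b + 1 : ℝ)]
  congr 1
  refine integral_congr_ae ?_
  filter_upwards [ae_forall_lt_of_nestedAlong hcolumns] with x hx
  have hrow : BoundedMeasurable (U x) := hU.comp (φ := Prod.mk x) (by fun_prop)
  rw [integral_pow_succ_eq_integral_mul_rank_pow hκ' hrow hx, mul_assoc, ← integral_mul_const]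
  refine congrArg _ (integral_congr_ae (.of_forall fun y => ?_))
  ring

end CompleteBipartite

/-! ### Polynomials -/

section Polynomials

lemma ae_polynomial_eval_ne_zero (μ : Measure ℝ) [NullSingletonClass μ] {q : Polynomial ℝ}
    (hq : q ≠ 0) : ∀ᵐ x ∂μ, q.eval x ≠ 0 := by
  filter_upwards [measure_eq_zero_iff_ae_notMem.1 (q.roots.toFinset.measure_zero μ)] with x hx h0
  exact hx (by simp [hq, h0])

lemma ae_mvPolynomial_eval_ne_zero {n : ℕ} (μ : Fin n → Measure ℝ) [∀ i, SigmaFinite (μ i)]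
    [∀ i, NullSingletonClass (μ i)] {p : MvPolynomial (Fin n) ℝ} (hp : p ≠ 0) :
    ∀ᵐ z ∂Measure.pi μ, MvPolynomial.eval z p ≠ 0 := by
  induction n with
  | zero =>
    refine .of_forall fun z h => hp (MvPolynomial.funext fun v => ?_)
    rw [Subsingleton.elim v z, h, map_zero]
  | succ n ih =>
    set q := MvPolynomial.finSuccEquiv ℝ n p
    have hlead : q.leadingCoeff ≠ 0 :=
      Polynomial.leadingCoeff_ne_zero.2 ((EmbeddingLike.map_ne_zero_iff).2 hp)
    have hsplit := measurePreserving_piFinSuccAbove μ 0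
    have hfibre : ∀ᵐ w ∂(μ 0).prod (Measure.pi fun j : Fin n => μ (Fin.succAbove 0 j)),
        MvPolynomial.eval (Fin.cons w.1 w.2 : Fin (n + 1) → ℝ) p ≠ 0 := by
      have hmeas : Measurable fun w : ℝ × (Fin n → ℝ) =>
          MvPolynomial.eval (Fin.cons w.1 w.2 : Fin (n + 1) → ℝ) p :=
        ((MvPolynomial.continuous_eval p).comp (by fun_prop)).measurable
      have hset := (hmeas (measurableSet_singleton 0)).compl
      refine (Measure.ae_prod_iff_ae_ae hset).2 ((Measure.ae_ae_comm hset).2 ?_)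
      filter_upwards [ih (fun j => μ (Fin.succAbove 0 j)) hlead] with s hs
      have hmap : q.map (MvPolynomial.eval s) ≠ 0 := fun h => hs (by
        rw [Polynomial.leadingCoeff, ← Polynomial.coeff_map, h, Polynomial.coeff_zero])
      filter_upwards [ae_polynomial_eval_ne_zero (μ 0) hmap] with x hx
      change MvPolynomial.eval (Fin.cons x s : Fin (n + 1) → ℝ) p ≠ 0
      rwa [MvPolynomial.eval_eq_eval_mv_eval']
    filter_upwards [hsplit.quasiMeasurePreserving.ae hfibre] with z hz
    simpa using hz

lemma eval_vec_eq_sum {R : Type*} [CommSemiring R] (p : MvPolynomial (Fin 2) R) (x y : R) :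
    MvPolynomial.eval ![x, y] p = ∑ d ∈ p.support, p.coeff d * (x ^ d 0 * y ^ d 1) := by
  simp only [MvPolynomial.eval_eq', Fin.prod_univ_two, Matrix.cons_val_zero, Matrix.cons_val_one]

open unitInterval

lemma ae_eval_vec_ne_zero {p : MvPolynomial (Fin 2) ℝ} (hp : p ≠ 0) :
    ∀ᵐ w : I × I, MvPolynomial.eval ![(w.1 : ℝ), w.2] p ≠ 0 := by
  have hcoe := measurePreserving_coe
  have hpair := ((measurePreserving_finTwoArrow (volume.restrict I)).symm _).comp (hcoe.prod hcoe)
  exact hpair.quasiMeasurePreserving.ae (ae_mvPolynomial_eval_ne_zero _ hp)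

lemma boundedMeasurable_eval_vec (p : MvPolynomial (Fin 2) ℝ) :
    BoundedMeasurable fun w : I × I => MvPolynomial.eval ![(w.1 : ℝ), w.2] p :=
  .of_continuous ((MvPolynomial.continuous_eval p).comp (by fun_prop))

variable {α β L L' : Type*} [MeasurableSpace α] [MeasurableSpace β] [LinearOrder L] [LinearOrder L']
  {μ : Measure α} {ν : Measure β} [IsProbabilityMeasure μ] [IsProbabilityMeasure ν]
  {κ : α → L} {κ' : β → L'} {U : α → β → ℝ}

lemma integral_mul_eval_rank_eq_sum_bipartiteDensity (hκ : IsRankingKey μ κ)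
    (hκ' : IsRankingKey ν κ') (hU : BoundedMeasurable (Function.uncurry U))
    (hrows : NestedAlong μ ν κ U) (hcolumns : NestedAlong ν μ κ' fun y x => U x y)
    (p : MvPolynomial (Fin 2) ℝ) :
    ∫ w, U w.1 w.2 * MvPolynomial.eval ![(rank μ κ w.1 : ℝ), rank ν κ' w.2] p ∂μ.prod ν =
      ∑ d ∈ p.support, p.coeff d / ((d 0 + 1) * (d 1 + 1)) *
        bipartiteDensity μ ν (Finset.univ : Finset (Fin (d 0 + 1) × Fin (d 1 + 1))) U := by
  have hmonomial : ∀ a b : ℕ, Integrable (fun w : α × β =>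
      U w.1 w.2 * ((rank μ κ w.1 : ℝ) ^ a * (rank ν κ' w.2 : ℝ) ^ b)) (μ.prod ν) := fun a b =>
    (hU.mul (((boundedMeasurable_rank_pow hκ a).comp measurable_fst).mul
      ((boundedMeasurable_rank_pow hκ' b).comp measurable_snd))).integrable _
  have hexpand : ∀ w : α × β,
      U w.1 w.2 * MvPolynomial.eval ![(rank μ κ w.1 : ℝ), rank ν κ' w.2] p = ∑ d ∈ p.support,
        p.coeff d * (U w.1 w.2 * ((rank μ κ w.1 : ℝ) ^ d 0 * (rank ν κ' w.2 : ℝ) ^ d 1)) :=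
    fun w => by
      rw [eval_vec_eq_sum, Finset.mul_sum]
      exact Finset.sum_congr rfl fun d _ => mul_left_comm _ _ _
  simp only [hexpand]
  rw [integral_finsetSum _ fun d _ => (hmonomial _ _).const_mul _]
  refine Finset.sum_congr rfl fun d _ => ?_
  rw [integral_const_mul, integral_prod _ (hmonomial _ _),
    bipartiteDensity_univ_eq_integral_mul_rank_pow hκ hκ' hU hrows hcolumns]
  field_simp

lemma ae_eq_ite_nonneg_of_integral_mul_eq {Ω : Type*} [MeasurableSpace Ω] {μ : Measure Ω}
    {V q : Ω → ℝ} (hV : ∀ᵐ w ∂μ, V w ∈ Set.Icc 0 1) (hVq : Integrable (fun w => V w * q w) μ)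
    (hq : Integrable q μ) (hne : ∀ᵐ w ∂μ, q w ≠ 0)
    (h : ∫ w, V w * q w ∂μ = ∫ w, max (q w) 0 ∂μ) :
    ∀ᵐ w ∂μ, V w = if 0 ≤ q w then 1 else 0 := by
  have hnonneg : 0 ≤ᵐ[μ] fun w => max (q w) 0 - V w * q w := by
    filter_upwards [hV] with w hw
    rcases le_total 0 (q w) with hqw | hqw
    · simpa only [Pi.zero_apply, max_eq_left hqw, sub_nonneg] using mul_le_of_le_one_left hqw hw.2
    · simpa only [Pi.zero_apply, max_eq_right hqw, sub_nonneg] using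
        mul_nonpos_of_nonneg_of_nonpos hw.1 hqw
  have hzero : ∫ w, max (q w) 0 - V w * q w ∂μ = 0 := by
    rw [integral_sub hq.pos_part hVq, h, sub_self]
  filter_upwards [(integral_eq_zero_iff_of_nonneg_ae hnonneg (hq.pos_part.sub hVq)).1 hzero, hne]
    with w hw hqw
  simp only [Pi.zero_apply, sub_eq_zero] at hw
  split_ifs with hpos
  · exact mul_right_cancel₀ hqw (by rw [← hw, max_eq_left hpos, one_mul])
  · exact mul_right_cancel₀ hqw (by rw [← hw, max_eq_right (not_le.1 hpos).le, zero_mul])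

end Polynomials

/-! ### Threshold kernels -/

section Antitone

variable {α β : Type*} {U : α → β → ℝ}

lemma rowExcess_eq_zero_of_antitone [Preorder α] (h01 : ∀ x y, U x y = 0 ∨ U x y = 1)
    (hU : Antitone U) {w : α × α} (hw : w.2 ≤ w.1) (y : β) : rowExcess U w y = 0 := by
  have hle : U w.1 y ≤ U w.2 y := hU hw y
  rcases h01 w.1 y with h1 | h1
  · rw [rowExcess, h1, zero_mul]
  · rcases h01 w.2 y with h2 | h2
    · linarith
    · rw [rowExcess, h2, sub_self, mul_zero]

variable [MeasurableSpace α] [MeasurableSpace β]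

lemma nestedAlong_id_of_antitone [Preorder α] (μ : Measure α) (ν : Measure β)
    (h01 : ∀ x y, U x y = 0 ∨ U x y = 1) (hU : Antitone U) : NestedAlong μ ν id U :=
  .of_forall fun y => .of_forall fun _ hw => rowExcess_eq_zero_of_antitone h01 hU hw.le y

lemma nestingDefect_eq_zero_of_antitone [LinearOrder α] (μ : Measure α) (ν : Measure β)
    (h01 : ∀ x y, U x y = 0 ∨ U x y = 1) (hU : Antitone U) : nestingDefect μ ν U = 0 := by
  refine integral_eq_zero_of_ae (.of_forall fun v => ?_)
  rcases le_total v.1.2 v.1.1 with hv | hv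
  · simp [rowExcess_eq_zero_of_antitone h01 hU hv]
  · simp [rowExcess_eq_zero_of_antitone h01 hU (w := v.1.swap) hv]

end Antitone

lemma boundedMeasurable_unitKernel {W : ℝ → ℝ → ℝ} (hW : memW W) :
    BoundedMeasurable (Function.uncurry (unitKernel W)) := by
  obtain ⟨hmeas, -, C, hC⟩ := hW
  exact ⟨hmeas.comp (measurable_subtype_coe.prodMap measurable_subtype_coe), C,
    fun w => hC _ w.1.2 _ w.2.2⟩

section ThresholdKernel

open unitInterval

/-- The indicator of the region where `p` is nonnegative. -/
def thresholdKernel (p : MvPolynomial (Fin 2) ℝ) (x y : ℝ) : ℝ :=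
  if 0 ≤ MvPolynomial.eval ![x, y] p then 1 else 0

variable {p : MvPolynomial (Fin 2) ℝ}

lemma thresholdKernel_eq_zero_or_one (p : MvPolynomial (Fin 2) ℝ) (x y : ℝ) :
    thresholdKernel p x y = 0 ∨ thresholdKernel p x y = 1 := by
  unfold thresholdKernel
  split_ifs <;> simp

lemma thresholdKernel_mul_eval (p : MvPolynomial (Fin 2) ℝ) (x y : ℝ) :
    thresholdKernel p x y * MvPolynomial.eval ![x, y] p = max (MvPolynomial.eval ![x, y] p) 0 := by
  unfold thresholdKernel
  split_ifs with h
  · rw [one_mul, max_eq_left h]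
  · rw [zero_mul, max_eq_right (not_le.1 h).le]

lemma thresholdKernel_comm
    (hsym : ∀ x y : ℝ, MvPolynomial.eval ![x, y] p = MvPolynomial.eval ![y, x] p) (x y : ℝ) :
    thresholdKernel p x y = thresholdKernel p y x := by
  rw [thresholdKernel, thresholdKernel, hsym]

lemma measurable_thresholdKernel (p : MvPolynomial (Fin 2) ℝ) :
    Measurable (Function.uncurry (thresholdKernel p)) := by
  have heval : Continuous fun w : ℝ × ℝ => MvPolynomial.eval ![w.1, w.2] p :=
    (MvPolynomial.continuous_eval p).comp (by fun_prop)
  exact Measurable.ite (measurableSet_le measurable_const heval.measurable) measurable_const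
    measurable_const

lemma memW_thresholdKernel
    (hsym : ∀ x y : ℝ, MvPolynomial.eval ![x, y] p = MvPolynomial.eval ![y, x] p) :
    memW (thresholdKernel p) := by
  refine ⟨measurable_thresholdKernel p, fun x _ y _ => thresholdKernel_comm hsym x y, 1,
    fun x _ y _ => ?_⟩
  rcases thresholdKernel_eq_zero_or_one p x y with h | h <;> simp [h]

lemma antitone_unitKernel_thresholdKernel
    (hmono : ∀ y : I, Antitone fun x : I => MvPolynomial.eval ![(x : ℝ), y] p) :
    Antitone (unitKernel (thresholdKernel p)) := by
  intro x x' hx y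
  have hle := hmono y hx
  unfold unitKernel thresholdKernel
  split_ifs with h' h
  exacts [le_rfl, absurd (h'.trans hle) h, zero_le_one, le_rfl]

lemma integral_max_eval_eq_sum_bipartiteDensity
    (hsym : ∀ x y : ℝ, MvPolynomial.eval ![x, y] p = MvPolynomial.eval ![y, x] p)
    (hmono : ∀ y : I, Antitone fun x : I => MvPolynomial.eval ![(x : ℝ), y] p) :
    ∫ w : I × I, max (MvPolynomial.eval ![(w.1 : ℝ), w.2] p) 0 =
      ∑ d ∈ p.support, p.coeff d / ((d 0 + 1) * (d 1 + 1)) *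
        bipartiteDensity volume volume (Finset.univ : Finset (Fin (d 0 + 1) × Fin (d 1 + 1)))
          (unitKernel (thresholdKernel p)) := by
  have hrows := nestedAlong_id_of_antitone (volume : Measure I) (volume : Measure I)
    (fun x y => thresholdKernel_eq_zero_or_one p x y) (antitone_unitKernel_thresholdKernel hmono)
  have hcomm : (fun y x => unitKernel (thresholdKernel p) x y) = unitKernel (thresholdKernel p) :=
    funext₂ fun y x => thresholdKernel_comm hsym x y
  have h := integral_mul_eval_rank_eq_sum_bipartiteDensity isRankingKey_id isRankingKey_id
    (boundedMeasurable_unitKernel (memW_thresholdKernel hsym)) hrows (hcomm.symm ▸ hrows) p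
  simpa only [rank_volume_id, unitKernel, thresholdKernel_mul_eval, ← Measure.volume_eq_prod]
    using h

variable {α β L L' : Type*} [MeasurableSpace α] [MeasurableSpace β] [LinearOrder L] [LinearOrder L']
  {μ : Measure α} {ν : Measure β} [IsProbabilityMeasure μ] [IsProbabilityMeasure ν]
  {κ : α → L} {κ' : β → L'} {U : α → β → ℝ}

lemma ae_eq_thresholdKernel_rank (hp : p ≠ 0)
    (hsym : ∀ x y : ℝ, MvPolynomial.eval ![x, y] p = MvPolynomial.eval ![y, x] p)
    (hmono : ∀ y : I, Antitone fun x : I => MvPolynomial.eval ![(x : ℝ), y] p)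
    (hκ : IsRankingKey μ κ) (hκ' : IsRankingKey ν κ')
    (hU : BoundedMeasurable (Function.uncurry U)) (hrows : NestedAlong μ ν κ U)
    (hcolumns : NestedAlong ν μ κ' fun y x => U x y)
    (h01 : ∀ᵐ w ∂μ.prod ν, U w.1 w.2 ∈ Set.Icc 0 1)
    (hdensity : ∀ d ∈ p.support,
      bipartiteDensity μ ν (Finset.univ : Finset (Fin (d 0 + 1) × Fin (d 1 + 1))) U =
        bipartiteDensity volume volume
          (Finset.univ : Finset (Fin (d 0 + 1) × Fin (d 1 + 1))) (unitKernel (thresholdKernel p))) :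
    ∀ᵐ w ∂μ.prod ν,
      U w.1 w.2 = unitKernel (thresholdKernel p) (rank μ κ w.1) (rank ν κ' w.2) := by
  have hranks := (measurePreserving_rank hκ).prod (measurePreserving_rank hκ')
  have hq := (boundedMeasurable_eval_vec p).comp hranks.measurable
  refine ae_eq_ite_nonneg_of_integral_mul_eq h01 ((hU.mul hq).integrable _) (hq.integrable _)
    (hranks.quasiMeasurePreserving.ae (ae_eval_vec_ne_zero hp)) ?_
  have htransfer : ∫ w, max (MvPolynomial.eval ![(rank μ κ w.1 : ℝ), rank ν κ' w.2] p) 0 ∂μ.prod ν =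
      ∫ w : I × I, max (MvPolynomial.eval ![(w.1 : ℝ), w.2] p) 0 := by
    rw [Measure.volume_eq_prod, ← hranks.map_eq, integral_map hranks.measurable.aemeasurable
      ((boundedMeasurable_eval_vec p).measurable.max measurable_const).aestronglyMeasurable]
    rfl
  calc _ = _ := integral_mul_eval_rank_eq_sum_bipartiteDensity hκ hκ' hU hrows hcolumns p
    _ = _ := Finset.sum_congr rfl fun d hd => by rw [hdensity d hd]
    _ = _ := (integral_max_eval_eq_sum_bipartiteDensity hsym hmono).symm
    _ = _ := htransfer.symm

end ThresholdKernel

/-! ### Forcing -/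

section Forcing

open unitInterval

lemma finitelyForcible_of_forall_lt {A : (ℝ → ℝ → ℝ) → Prop} {W : ℝ → ℝ → ℝ} (hW : A W) (N : ℕ)
    (h : ∀ U, A U → (∀ n < N, ∀ F : SimpleGraph (Fin n), homDensity F U = homDensity F W) →
      WeaklyIsomorphic U W) :
    FinitelyForcible A W := by
  let e := Fintype.equivFin (Σ n : Fin N, SimpleGraph (Fin n))
  refine ⟨hW, _, fun i => (e.symm i).1, fun i => (e.symm i).2, fun U hU heq => h U hU ?_⟩
  have hall : ∀ G : Σ n : Fin N, SimpleGraph (Fin n), homDensity G.2 U = homDensity G.2 W :=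
    e.symm.surjective.forall.2 heq
  exact fun n hn F => hall ⟨⟨n, hn⟩, F⟩

lemma exponent_le_totalDegree {ι R : Type*} [CommSemiring R] {p : MvPolynomial ι R} {d : ι →₀ ℕ}
    (hd : d ∈ p.support) (i : ι) : d i ≤ p.totalDegree :=
  (MvPolynomial.monomial_le_degreeOf i hd).trans (MvPolynomial.degreeOf_le_totalDegree p i)

lemma bipartiteDensity_unitKernel_eq_of_homDensity_eq {U W : ℝ → ℝ → ℝ}
    (hU : Measurable (Function.uncurry U)) (hW : Measurable (Function.uncurry W)) {a b : ℕ}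
    (h : ∀ F : SimpleGraph (Fin (a + b)), homDensity F U = homDensity F W)
    (E : Finset (Fin a × Fin b)) :
    bipartiteDensity volume volume E (unitKernel U) =
      bipartiteDensity volume volume E (unitKernel W) := by
  simp only [← graphDensity_bipartiteGraph, ← homDensity_eq_graphDensity _ hU,
    ← homDensity_eq_graphDensity _ hW, h]

variable {p : MvPolynomial (Fin 2) ℝ}

lemma ae_eq_thresholdKernel_rank_degreeKey {α : Type*} [MeasurableSpace α] [LinearOrder α]
    [TopologicalSpace α] [OrderClosedTopology α] [SecondCountableTopology α]
    [OpensMeasurableSpace α] {μ : Measure α} [IsProbabilityMeasure μ] [NullSingletonClass μ]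
    [IsSeparable μ] {U : α → α → ℝ} (hp : p ≠ 0)
    (hsym : ∀ x y : ℝ, MvPolynomial.eval ![x, y] p = MvPolynomial.eval ![y, x] p)
    (hmono : ∀ y : I, Antitone fun x : I => MvPolynomial.eval ![(x : ℝ), y] p)
    (hU : BoundedMeasurable (Function.uncurry U)) (hcomm : ∀ x y, U x y = U y x)
    (hdefect : nestingDefect μ μ U = 0)
    (hdensity : ∀ d ∈ p.support,
      bipartiteDensity μ μ (Finset.univ : Finset (Fin (d 0 + 1) × Fin (d 1 + 1))) U =
        bipartiteDensity volume volume
          (Finset.univ : Finset (Fin (d 0 + 1) × Fin (d 1 + 1))) (unitKernel (thresholdKernel p))) :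
    ∀ᵐ w ∂μ.prod μ, U w.1 w.2 = unitKernel (thresholdKernel p)
      (rank μ (degreeKey μ U) w.1) (rank μ (degreeKey μ U) w.2) := by
  have hκ := isRankingKey_degreeKey (μ := μ) (ν := μ) hU.measurable
  have hrows := nestedAlong_degreeKey_of_nestingDefect_eq_zero hU hdefect
  have hflip : (fun y x => U x y) = U := funext₂ fun y x => hcomm x y
  have h01 : ∀ᵐ w ∂μ.prod μ, U w.1 w.2 ∈ Set.Icc 0 1 := by
    refine (Measure.ae_prod_iff_ae_ae (hU.measurable measurableSet_Icc)).2 ?_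
    filter_upwards [ae_eq_zero_or_one_of_nestingDefect_eq_zero hU hdefect] with x hx
    filter_upwards [hx] with y hy
    rcases hy with hy | hy <;> simp [hy]
  exact ae_eq_thresholdKernel_rank hp hsym hmono hκ hκ hU hrows (hflip.symm ▸ hrows) h01 hdensity

lemma finitelyForcible_thresholdKernel (hp : p ≠ 0)
    (hsym : ∀ x y : ℝ, MvPolynomial.eval ![x, y] p = MvPolynomial.eval ![y, x] p)
    (hmono : ∀ y : I, Antitone fun x : I => MvPolynomial.eval ![(x : ℝ), y] p) :
    FinitelyForcible memW (thresholdKernel p) := by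
  have hW := memW_thresholdKernel hsym
  refine finitelyForcible_of_forall_lt hW (2 * p.totalDegree + 9) fun U hU heq n F => ?_
  have hbipartite : ∀ {a b : ℕ}, a + b < 2 * p.totalDegree + 9 → ∀ E : Finset (Fin a × Fin b),
      bipartiteDensity volume volume E (unitKernel U) =
        bipartiteDensity volume volume E (unitKernel (thresholdKernel p)) := fun hab =>
    bipartiteDensity_unitKernel_eq_of_homDensity_eq hU.1 hW.1 (heq _ hab)
  have hdefect : nestingDefect volume volume (unitKernel U) = 0 :=
    (nestingDefect_eq_of_bipartiteDensity_eq (boundedMeasurable_unitKernel hU)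
      (boundedMeasurable_unitKernel hW) (hbipartite (by omega))).trans
    (nestingDefect_eq_zero_of_antitone _ _ (fun x y => thresholdKernel_eq_zero_or_one p x y)
      (antitone_unitKernel_thresholdKernel hmono))
  have hae := ae_eq_thresholdKernel_rank_degreeKey hp hsym hmono (boundedMeasurable_unitKernel hU)
    (fun x y => hU.2.1 x x.2 y y.2) hdefect fun d hd => hbipartite (by
      have := exponent_le_totalDegree hd 0
      have := exponent_le_totalDegree hd 1
      omega) _
  have hrank := measurePreserving_rank (isRankingKey_degreeKey (μ := volume) (ν := volume)
    (boundedMeasurable_unitKernel hU).measurable)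
  rw [homDensity_eq_graphDensity F hU.1, homDensity_eq_graphDensity F hW.1,
    ← graphDensity_comp_measurePreserving hrank (boundedMeasurable_unitKernel hW).measurable]
  exact graphDensity_congr_ae hae F

end Forcing

/-- for a symmetric two-variable real polynomial `p` which is monotone
decreasing on `[0,1]²`, the graphon `W = 1_{p(x,y) ≥ 0}` is finitely forcible in `𝒲`. -/
theorem statement7 (p : MvPolynomial (Fin 2) ℝ)
    (hsym : ∀ x y : ℝ, MvPolynomial.eval ![x, y] p = MvPolynomial.eval ![y, x] p)
    (hmono : ∀ x x' y y' : ℝ, x ∈ I01 → x' ∈ I01 → y ∈ I01 → y' ∈ I01 →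
      x ≤ x' → y ≤ y' →
      MvPolynomial.eval ![x', y'] p ≤ MvPolynomial.eval ![x, y] p) :
    FinitelyForcible memW
      (fun x y => if 0 ≤ MvPolynomial.eval ![x, y] p then (1 : ℝ) else 0) := by
  by_cases hp : p = 0
  · have hone := finitelyForcible_thresholdKernel (p := 1) one_ne_zero (fun x y => by simp)
      fun y x x' _ => by simp
    have hkernel : thresholdKernel p = thresholdKernel 1 := by
      funext x y
      simp [thresholdKernel, hp]
    exact (congrArg _ hkernel).mpr hone
  · exact finitelyForcible_thresholdKernel hp hsym fun y x x' hx =>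
      hmono x x' y y x.2 x'.2 y.2 y.2 hx le_rfl
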